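/- Let γ be an affinely parametrized geodesic of a warped product M̂ ×_f Y, and E(u) the parallel transport along γ of a vector e orthogonal to N(0). Then the fiber component of E is Ē^i = f h N̄^i + f⁻¹ Ē^i_∥, where Ē^i_∥ is the ḡ-parallel transport along the fiber projection γ̄ of f(0) e^i (i.e. N̄^j ∇̄_j Ē^i_∥ = 0, Ē^i_∥(0) = f(0) e^i), and h(u) is the unique solution of dh/du = Ê^a ∂_a(1/f) with h(0) = 0. In particular, if e^a = 0 then the full parallel transport is E^μ(u) = (0, Ē^i_∥ / f). -/

import Mathlib

open Filter MeasureTheory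
open scoped BigOperators Topology

noncomputable section

namespace Paper

variable {ι : Type*} [Fintype ι] [DecidableEq ι]
variable {κ : Type*} [Fintype κ] [DecidableEq κ]

/-- Coordinate partial derivative of a scalar field in the direction `ρ`. -/
def pd (h : (ι → ℝ) → ℝ) (ρ : ι) (x : ι → ℝ) : ℝ :=
  fderiv ℝ h x (Pi.single ρ 1)

/-- The inverse metric. -/
def ginv (g : (ι → ℝ) → Matrix ι ι ℝ) (x : ι → ℝ) : Matrix ι ι ℝ :=
  (g x)⁻¹

/-- Christoffel symbols `Γ^μ_{ρσ} = ½ g^{μν}(∂_ρ g_{νσ} + ∂_σ g_{νρ} − ∂_ν g_{ρσ})`. -/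
def Γc (g : (ι → ℝ) → Matrix ι ι ℝ) (μ ρ σ : ι) (x : ι → ℝ) : ℝ :=
  (1 / 2) * ∑ ν, ginv g x μ ν *
    (pd (fun y => g y ν σ) ρ x + pd (fun y => g y ν ρ) σ x - pd (fun y => g y ρ σ) ν x)

/-- Riemann curvature tensor `R^α_{βμν}`. -/
def Riem (g : (ι → ℝ) → Matrix ι ι ℝ) (α β μ ν : ι) (x : ι → ℝ) : ℝ :=
  pd (Γc g α ν β) μ x - pd (Γc g α μ β) ν x
    + ∑ lam, Γc g α μ lam x * Γc g lam ν β x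
    - ∑ lam, Γc g α ν lam x * Γc g lam μ β x

/-- Riemann tensor with the first index lowered, `R_{μνρσ} = g_{μλ} R^λ_{νρσ}`. -/
def RiemLow (g : (ι → ℝ) → Matrix ι ι ℝ) (μ ν ρ σ : ι) (x : ι → ℝ) : ℝ :=
  ∑ lam, g x μ lam * Riem g lam ν ρ σ x

/-- Ricci tensor `R_{μν} = R^ρ_{μρν}`. -/
def Ric (g : (ι → ℝ) → Matrix ι ι ℝ) (μ ν : ι) (x : ι → ℝ) : ℝ :=
  ∑ ρ, Riem g ρ μ ρ ν x

/-- Scalar product of two vectors with respect to the metric at `x`. -/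
def sq (g : (ι → ℝ) → Matrix ι ι ℝ) (x : ι → ℝ) (v w : ι → ℝ) : ℝ :=
  ∑ μ, ∑ ν, g x μ ν * v μ * w ν

/-- Velocity (tangent vector field) of a parametrized curve. -/
def vel (γ : ℝ → ι → ℝ) (u : ℝ) : ι → ℝ :=
  fun μ => deriv (fun w => γ w μ) u

/-- Covariant derivative, along the curve `γ`, of a vector field `V` given along `γ`. -/
def covD (g : (ι → ℝ) → Matrix ι ι ℝ) (γ V : ℝ → ι → ℝ) (u : ℝ) (μ : ι) : ℝ :=
  deriv (fun w => V w μ) u + ∑ ρ, ∑ σ, Γc g μ ρ σ (γ u) * vel γ u ρ * V u σ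

/-- The (affinely parametrized) geodesic equation at parameter value `u`. -/
def GeodesicAt (g : (ι → ℝ) → Matrix ι ι ℝ) (γ : ℝ → ι → ℝ) (u : ℝ) : Prop :=
  ∀ μ, covD g γ (vel γ) u μ = 0

/-- `γ` is an affinely parametrized geodesic of `g`. -/
def IsGeodesic (g : (ι → ℝ) → Matrix ι ι ℝ) (γ : ℝ → ι → ℝ) : Prop :=
  ∀ u, GeodesicAt g γ u

/-- `E` is parallelly transported along `γ`. -/
def IsParallel (g : (ι → ℝ) → Matrix ι ι ℝ) (γ E : ℝ → ι → ℝ) : Prop :=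
  ∀ u μ, covD g γ E u μ = 0

def SmoothCurve (γ : ℝ → ι → ℝ) : Prop :=
  ∀ μ, ContDiff ℝ (⊤ : ℕ∞) fun u => γ u μ

/-- A smooth symmetric everywhere-nondegenerate metric. -/
def SmoothMetric (g : (ι → ℝ) → Matrix ι ι ℝ) : Prop :=
  (∀ μ ν, ContDiff ℝ (⊤ : ℕ∞) fun x => g x μ ν) ∧
    (∀ x μ ν, g x μ ν = g x ν μ) ∧ ∀ x, IsUnit (g x).det

/-- Lorentzian signature `(−,+,…,+)`: there is a timelike vector whose `g`-orthogonal
complement is positive definite. -/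
def Lorentzian (g : (ι → ℝ) → Matrix ι ι ℝ) : Prop :=
  SmoothMetric g ∧
    ∀ x, ∃ t : ι → ℝ, sq g x t t < 0 ∧ ∀ v : ι → ℝ, sq g x t v = 0 → v ≠ 0 → 0 < sq g x v v

/-- Riemannian (positive definite) metric. -/
def Riemannian (g : (ι → ℝ) → Matrix ι ι ℝ) : Prop :=
  SmoothMetric g ∧ ∀ x, ∀ v : ι → ℝ, v ≠ 0 → 0 < sq g x v v

def NullVec (g : (ι → ℝ) → Matrix ι ι ℝ) (x v : ι → ℝ) : Prop :=
  sq g x v v = 0 ∧ v ≠ 0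

/-- A time orientation: an everywhere timelike vector field. -/
def TimeOrientation (g : (ι → ℝ) → Matrix ι ι ℝ) (T : (ι → ℝ) → ι → ℝ) : Prop :=
  ∀ x, sq g x (T x) (T x) < 0

/-- `v` is a future-pointing causal vector at `x` (wrt the time orientation `T`). -/
def FutureCausal (g : (ι → ℝ) → Matrix ι ι ℝ) (T : (ι → ℝ) → ι → ℝ) (x v : ι → ℝ) : Prop :=
  sq g x v v ≤ 0 ∧ v ≠ 0 ∧ sq g x (T x) v < 0

/-- `S` is met exactly once by every inextendible future-directed causal curve
(inextendibility being encoded by parametrization by Euclidean arclength on all of `ℝ`). -/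
def IsCauchySurface (g : (ι → ℝ) → Matrix ι ι ℝ) (T : (ι → ℝ) → ι → ℝ)
    (S : Set (ι → ℝ)) : Prop :=
  ∀ γ : ℝ → ι → ℝ, (∀ μ, Differentiable ℝ fun u => γ u μ) →
    (∀ u, FutureCausal g T (γ u) (vel γ u)) →
    (∀ u, ∑ μ, (vel γ u μ) ^ 2 = 1) → ∃! u, γ u ∈ S

/-- `g`-gradient vector of a scalar function. -/
def gradVec (g : (ι → ℝ) → Matrix ι ι ℝ) (τ : (ι → ℝ) → ℝ) (x : ι → ℝ) : ι → ℝ :=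
  fun μ => ∑ ν, ginv g x μ ν * pd τ ν x

/-- Existence of a non-compact (spacelike) Cauchy hypersurface, encoded as a regular
level set of a smooth function with timelike gradient. -/
def HasNoncompactCauchySurface (g : (ι → ℝ) → Matrix ι ι ℝ)
    (T : (ι → ℝ) → ι → ℝ) : Prop :=
  ∃ τ : (ι → ℝ) → ℝ, ContDiff ℝ (⊤ : ℕ∞) τ ∧ ¬ IsCompact {x | τ x = 0} ∧
    (∀ x, τ x = 0 → sq g x (gradVec g τ x) (gradVec g τ x) < 0) ∧
    IsCauchySurface g T {x | τ x = 0}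

/-- Null geodesic completeness: every null initial datum extends to a geodesic
defined for all values of the affine parameter. -/
def NullComplete (g : (ι → ℝ) → Matrix ι ι ℝ) : Prop :=
  ∀ x v : ι → ℝ, NullVec g x v →
    ∃ γ : ℝ → ι → ℝ, SmoothCurve γ ∧ γ 0 = x ∧ vel γ 0 = v ∧ IsGeodesic g γ

/-- Future null geodesic completeness. -/
def FutureNullComplete (g : (ι → ℝ) → Matrix ι ι ℝ) (T : (ι → ℝ) → ι → ℝ) : Prop :=
  ∀ x v : ι → ℝ, NullVec g x v → FutureCausal g T x v →
    ∃ γ : ℝ → ι → ℝ, SmoothCurve γ ∧ γ 0 = x ∧ vel γ 0 = v ∧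
      ∀ u, 0 ≤ u → GeodesicAt g γ u

/-! ### Submanifolds given implicitly as regular zero sets -/

/-- Differential (lowered normal covectors) of the defining map `F`. -/
def dFm (F : (ι → ℝ) → κ → ℝ) (α : κ) (μ : ι) (x : ι → ℝ) : ℝ :=
  pd (fun y => F y α) μ x

/-- The normal vectors `ν_α = grad F^α` spanning the normal space. -/
def normalBasis (g : (ι → ℝ) → Matrix ι ι ℝ) (F : (ι → ℝ) → κ → ℝ) (α : κ)
    (x : ι → ℝ) : ι → ℝ :=
  fun μ => ∑ ν, ginv g x μ ν * dFm F α ν x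

/-- Gram matrix `W_{αβ} = g(ν_α, ν_β)` of the normals. -/
def gram (g : (ι → ℝ) → Matrix ι ι ℝ) (F : (ι → ℝ) → κ → ℝ) (x : ι → ℝ) :
    Matrix κ κ ℝ :=
  Matrix.of fun α β => ∑ μ, dFm F α μ x * normalBasis g F β x μ

/-- The (contravariant) orthogonal projector onto the tangent space of `{F = 0}`. -/
def tanProj (g : (ι → ℝ) → Matrix ι ι ℝ) (F : (ι → ℝ) → κ → ℝ) (x : ι → ℝ)
    (μ ν : ι) : ℝ :=
  ginv g x μ ν -
    ∑ α, ∑ β, (gram g F x)⁻¹ α β * normalBasis g F α x μ * normalBasis g F β x ν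

/-- Covariant Hessian `∇_μ ∇_ν F^α`. -/
def hessF (g : (ι → ℝ) → Matrix ι ι ℝ) (F : (ι → ℝ) → κ → ℝ) (α : κ) (μ ν : ι)
    (x : ι → ℝ) : ℝ :=
  pd (fun y => dFm F α ν y) μ x - ∑ lam, Γc g lam μ ν x * dFm F α lam x

/-- The expansion `θ(n)` of the submanifold `{F = 0}` along the normal
`n = ∑ c_α ν_α`, namely `θ(n) = ∑_α c_α h^{μν} ∇_μ∇_ν F^α`. -/
def expansionCoeff (g : (ι → ℝ) → Matrix ι ι ℝ) (F : (ι → ℝ) → κ → ℝ) (x : ι → ℝ)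
    (c : κ → ℝ) : ℝ :=
  ∑ α, c α * ∑ μ, ∑ ν, tanProj g F x μ ν * hessF g F α μ ν x

/-- `v` is tangent to the level set `{F = 0}` at `x`. -/
def TangentTo (F : (ι → ℝ) → κ → ℝ) (x v : ι → ℝ) : Prop :=
  ∀ α, ∑ μ, dFm F α μ x * v μ = 0

/-- The normal vector with components `c` in the basis of normals. -/
def NormalComb (g : (ι → ℝ) → Matrix ι ι ℝ) (F : (ι → ℝ) → κ → ℝ) (x : ι → ℝ)
    (c : κ → ℝ) : ι → ℝ :=
  fun μ => ∑ α, c α * normalBasis g F α x μ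

/-- A closed (compact without boundary) spacelike submanifold, given as the regular
zero set of the smooth map `F`, of co-dimension `card κ`. -/
def ClosedSpacelikeSubmanifold (g : (ι → ℝ) → Matrix ι ι ℝ)
    (F : (ι → ℝ) → κ → ℝ) : Prop :=
  (∀ α, ContDiff ℝ (⊤ : ℕ∞) fun x => F x α) ∧
    IsCompact {x | ∀ α, F x α = 0} ∧ {x | ∀ α, F x α = 0}.Nonempty ∧
    (∀ x, (∀ α, F x α = 0) → IsUnit (gram g F x).det) ∧
    (∀ x, (∀ α, F x α = 0) → ∀ v, TangentTo F x v → v ≠ 0 → 0 < sq g x v v)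

/-- Future-trapped: every future-pointing causal normal has negative expansion. -/
def FutureTrapped (g : (ι → ℝ) → Matrix ι ι ℝ) (T : (ι → ℝ) → ι → ℝ)
    (F : (ι → ℝ) → κ → ℝ) : Prop :=
  ∀ x, (∀ α, F x α = 0) → ∀ c : κ → ℝ,
    FutureCausal g T x (NormalComb g F x c) → expansionCoeff g F x c < 0

/-! ### Warped products -/

def basePt {d₁ d₂ : ℕ} (x : (Fin d₁ ⊕ Fin d₂) → ℝ) : Fin d₁ → ℝ :=
  fun a => x (Sum.inl a)

def fibPt {d₁ d₂ : ℕ} (x : (Fin d₁ ⊕ Fin d₂) → ℝ) : Fin d₂ → ℝ :=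
  fun i => x (Sum.inr i)

/-- The warped product metric `g = ĝ + f² ḡ` in adapted coordinates. -/
def warped {d₁ d₂ : ℕ} (gB : (Fin d₁ → ℝ) → Matrix (Fin d₁) (Fin d₁) ℝ)
    (gF : (Fin d₂ → ℝ) → Matrix (Fin d₂) (Fin d₂) ℝ) (f : (Fin d₁ → ℝ) → ℝ) :
    ((Fin d₁ ⊕ Fin d₂) → ℝ) → Matrix (Fin d₁ ⊕ Fin d₂) (Fin d₁ ⊕ Fin d₂) ℝ :=
  fun x => Matrix.of fun μ ν =>
    match μ, ν with
    | Sum.inl a, Sum.inl b => gB (basePt x) a b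
    | Sum.inl _, Sum.inr _ => 0
    | Sum.inr _, Sum.inl _ => 0
    | Sum.inr i, Sum.inr j => (f (basePt x)) ^ 2 * gF (fibPt x) i j

/-- Projection of a spacetime curve to the base. -/
def baseCurve {d₁ d₂ : ℕ} (γ : ℝ → (Fin d₁ ⊕ Fin d₂) → ℝ) : ℝ → Fin d₁ → ℝ :=
  fun u => basePt (γ u)

/-- Projection of a spacetime curve to the fiber. -/
def fibCurve {d₁ d₂ : ℕ} (γ : ℝ → (Fin d₁ ⊕ Fin d₂) → ℝ) : ℝ → Fin d₂ → ℝ :=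
  fun u => fibPt (γ u)

/-- Lift of a base vector to the warped product (vanishing fiber components). -/
def liftVec {d₁ d₂ : ℕ} (v : Fin d₁ → ℝ) : (Fin d₁ ⊕ Fin d₂) → ℝ :=
  fun μ => match μ with
  | Sum.inl a => v a
  | Sum.inr _ => 0

/-- Lift of a base vector field (e.g. a time orientation) to the warped product. -/
def liftT {d₁ d₂ : ℕ} (T : (Fin d₁ → ℝ) → Fin d₁ → ℝ) :
    ((Fin d₁ ⊕ Fin d₂) → ℝ) → (Fin d₁ ⊕ Fin d₂) → ℝ :=
  fun x => liftVec (T (basePt x))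

/-- Defining map of the lift `ζ_p ⊆ Y_p` of the submanifold `{Fb = 0} ⊆ Y`. -/
def liftF {d₁ d₂ m' : ℕ} (p : Fin d₁ → ℝ) (Fb : (Fin d₂ → ℝ) → Fin m' → ℝ) :
    ((Fin d₁ ⊕ Fin d₂) → ℝ) → (Fin d₁ ⊕ Fin m') → ℝ :=
  fun x α => match α with
  | Sum.inl a => x (Sum.inl a) - p a
  | Sum.inr β => Fb (fibPt x) β

/-- Covariant Hessian `∇_μ∇_ν f` of a scalar function. -/
def hess (g : (ι → ℝ) → Matrix ι ι ℝ) (f : (ι → ℝ) → ℝ) (μ ν : ι) (x : ι → ℝ) : ℝ :=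
  pd (fun y => pd f ν y) μ x - ∑ lam, Γc g lam μ ν x * pd f lam x

/-- `∇^μ f ∇_μ f`. -/
def gradSq (g : (ι → ℝ) → Matrix ι ι ℝ) (f : (ι → ℝ) → ℝ) (x : ι → ℝ) : ℝ :=
  ∑ μ, ∑ ν, ginv g x μ ν * pd f μ x * pd f ν x

/-! ### Parametrized submanifolds and their expansions -/

/-- Partial derivative of a parametrization `φ`. -/
def dpar {k : ℕ} (φ : (Fin k → ℝ) → ι → ℝ) (A : Fin k) (μ : ι)
    (y : Fin k → ℝ) : ℝ :=
  fderiv ℝ (fun z => φ z μ) y (Pi.single A 1)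

/-- First fundamental form of a parametrized submanifold. -/
def firstFF {k : ℕ} (g : (ι → ℝ) → Matrix ι ι ℝ) (φ : (Fin k → ℝ) → ι → ℝ)
    (y : Fin k → ℝ) : Matrix (Fin k) (Fin k) ℝ :=
  Matrix.of fun A B => ∑ μ, ∑ ν, g (φ y) μ ν * dpar φ A μ y * dpar φ B ν y

/-- The expansion `θ(n) = n_μ H^μ` of a parametrized submanifold along a normal `n`,
via `θ(n) = −γ^{AB} n_μ (∂_A∂_B φ^μ + Γ^μ_{ρσ} ∂_A φ^ρ ∂_B φ^σ)`. -/
def expansionPar {k : ℕ} (g : (ι → ℝ) → Matrix ι ι ℝ) (φ : (Fin k → ℝ) → ι → ℝ)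
    (y : Fin k → ℝ) (n : ι → ℝ) : ℝ :=
  - ∑ A, ∑ B, (firstFF g φ y)⁻¹ A B *
      ∑ μ, (∑ ν, g (φ y) μ ν * n ν) *
        (fderiv ℝ (fun z => dpar φ B μ z) y (Pi.single A 1)
          + ∑ ρ, ∑ σ, Γc g μ ρ σ (φ y) * dpar φ A ρ y * dpar φ B σ y)

/-!
Koszul's formula determines the Levi-Civita connection from the metric, and comparing it on the
base, the fiber and the warped product gives `∇̄_N̄ V̄ + f⁻¹ (df(N̂) V̄ + df(V̂) N̄)` for the fiber
part of `∇_N V`. For `V` parallel along `γ` this says `∇̄_N̄ (f V̄) = -df(V̂) N̄`; for `V = N` it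
follows that `f² N̄` is `ḡ`-parallel along the fiber projection. Since `h' = -df(Ê) / f²`, the
fields `f Ē` and `h f² N̄` have the same `ḡ`-covariant derivative, so their difference `Ē_∥` is
`ḡ`-parallel.

Parallel transport preserves the orthogonality of `E` and `N`, that is
`f² ḡ(N̄, Ē) = -ĝ(N̂, Ê)`. This decouples the base equation into the homogeneous linear equation
`∇̂_N̂ Ê = -f⁻¹ ĝ(N̂, Ê) ∇̂f`, whose only solution with `Ê(0) = 0` is zero; then `h = 0` too.
-/

section Curves

variable {n : Type*} {γ : ℝ → n → ℝ}

lemma SmoothCurve.differentiableAt (hγ : SmoothCurve γ) (u : ℝ) (μ : n) :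
    DifferentiableAt ℝ (fun w => γ w μ) u :=
  (hγ μ).differentiable (by simp) u

lemma SmoothCurve.vel (hγ : SmoothCurve γ) : SmoothCurve (vel γ) := fun μ =>
  (contDiff_infty_iff_deriv.1 (hγ μ)).2

lemma hasDerivAt_comp_curve [Finite n] {φ : (n → ℝ) → ℝ} {u : ℝ}
    (hφ : DifferentiableAt ℝ φ (γ u)) (hγ : ∀ μ, DifferentiableAt ℝ (fun w => γ w μ) u) :
    HasDerivAt (fun w => φ (γ w)) (fderiv ℝ φ (γ u) (vel γ u)) u := by
  have := Fintype.ofFinite n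
  exact hφ.hasFDerivAt.comp_hasDerivAt u (hasDerivAt_pi.2 fun μ => (hγ μ).hasDerivAt)

end Curves

section LinearODE

variable {F : Type*} [NormedAddCommGroup F] [NormedSpace ℝ F]

lemma eq_zero_of_hasDerivAt_clm_apply {A : ℝ → F →L[ℝ] F} (hA : Continuous A)
    {X : ℝ → F} (hX : ∀ t, HasDerivAt X (A t (X t)) t) {t₀ : ℝ} (h₀ : X t₀ = 0) (t : ℝ) :
    X t = 0 := by
  obtain ⟨a, ha⟩ := exists_lt (min t₀ t)
  obtain ⟨b, hb⟩ := exists_gt (max t₀ t)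
  obtain ⟨K, hK⟩ := (isCompact_Icc (a := a) (b := b)).exists_bound_of_continuousOn hA.continuousOn
  have lipschitz : ∀ s ∈ Set.Ioo a b, LipschitzOnWith K.toNNReal (A s) Set.univ := fun s hs =>
    ((A s).lipschitz.weaken <| by
      rw [← norm_toNNReal]
      exact Real.toNNReal_le_toNNReal (hK s (Set.Ioo_subset_Icc_self hs))).lipschitzOnWith
  exact ODE_solution_unique_of_mem_Ioo (g := fun _ => 0) lipschitz (by grind)
    (fun s _ => ⟨hX s, trivial⟩)
    (fun s _ => ⟨by simpa using hasDerivAt_const s (0 : F), trivial⟩)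
    h₀ (by grind : t ∈ Set.Ioo a b)

lemma eq_zero_of_hasDerivAt_isLinearMap_apply [FiniteDimensional ℝ F] {v : ℝ → F → F}
    (hlin : ∀ t, IsLinearMap ℝ (v t)) (hcont : ∀ x, Continuous fun t => v t x)
    {X : ℝ → F} (hX : ∀ t, HasDerivAt X (v t (X t)) t) {t₀ : ℝ} (h₀ : X t₀ = 0) (t : ℝ) :
    X t = 0 :=
  eq_zero_of_hasDerivAt_clm_apply
    (A := fun t => LinearMap.toContinuousLinearMap ((hlin t).mk' (v t)))
    (continuous_clm_apply.2 hcont) hX h₀ t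

end LinearODE

section ScalarProduct

open scoped Matrix

variable {n : Type*} [Fintype n] (g : (n → ℝ) → Matrix n n ℝ) (x : n → ℝ)

lemma sq_eq_dotProduct (v w : n → ℝ) : sq g x v w = v ⬝ᵥ g x *ᵥ w := by
  simp only [sq, dotProduct, Matrix.mulVec, Finset.mul_sum]
  exact Finset.sum_congr rfl fun μ _ => Finset.sum_congr rfl fun ν _ => by ring

lemma sq_add_left (v v' w : n → ℝ) : sq g x (v + v') w = sq g x v w + sq g x v' w := by
  simp only [sq_eq_dotProduct, add_dotProduct]

lemma sq_add_right (v w w' : n → ℝ) : sq g x v (w + w') = sq g x v w + sq g x v w' := by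
  simp only [sq_eq_dotProduct, Matrix.mulVec_add, dotProduct_add]

lemma sq_sub_right (v w w' : n → ℝ) : sq g x v (w - w') = sq g x v w - sq g x v w' := by
  simp only [sq_eq_dotProduct, Matrix.mulVec_sub, dotProduct_sub]

lemma sq_smul_right (c : ℝ) (v w : n → ℝ) : sq g x v (c • w) = c * sq g x v w := by
  simp only [sq_eq_dotProduct, Matrix.mulVec_smul, dotProduct_smul, smul_eq_mul]

variable {g x}

lemma sq_comm (hsymm : ∀ μ ν, g x μ ν = g x ν μ) (v w : n → ℝ) : sq g x v w = sq g x w v := by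
  unfold sq
  rw [Finset.sum_comm]
  exact Finset.sum_congr rfl fun μ _ => Finset.sum_congr rfl fun ν _ => by rw [hsymm]; ring

lemma eq_of_forall_sq_eq [DecidableEq n] (hdet : IsUnit (g x).det) {v w : n → ℝ}
    (h : ∀ z, sq g x z v = sq g x z w) : v = w := by
  apply Matrix.mulVec_injective_of_isUnit ((Matrix.isUnit_iff_isUnit_det _).2 hdet)
  refine dotProduct_eq _ _ fun z => ?_
  rw [dotProduct_comm, ← sq_eq_dotProduct, h, sq_eq_dotProduct, dotProduct_comm]

lemma fderiv_sq (hg : ∀ μ ν, DifferentiableAt ℝ (fun y => g y μ ν) x) (v w z : n → ℝ) :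
    fderiv ℝ (fun y => sq g y v w) x z
      = ∑ μ, ∑ ν, fderiv ℝ (fun y => g y μ ν) x z * v μ * w ν := by
  have h : HasFDerivAt (fun y => sq g y v w)
      (∑ μ, ∑ ν, w ν • v μ • fderiv ℝ (fun y => g y μ ν) x) x :=
    HasFDerivAt.fun_sum fun μ _ => HasFDerivAt.fun_sum fun ν _ =>
      ((hg μ ν).hasFDerivAt.mul_const (v μ)).mul_const (w ν)
  rw [h.fderiv]
  simp only [_root_.sum_apply, _root_.smul_apply, smul_eq_mul]
  exact Finset.sum_congr rfl fun μ _ => Finset.sum_congr rfl fun ν _ => by ring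

end ScalarProduct

section LeviCivita

open scoped Matrix

lemma fderiv_apply_eq_sum_pd (φ : (ι → ℝ) → ℝ) (x v : ι → ℝ) :
    fderiv ℝ φ x v = ∑ ρ, pd φ ρ x * v ρ := by
  conv_lhs => rw [pi_eq_sum_univ' v]
  simp only [map_sum, map_smul, smul_eq_mul, mul_comm, pd]

/-- The Christoffel symbols of `g` at `x` as a bilinear map of two vectors,
`Γ(v, w)^μ = Γ^μ_{ρσ} v^ρ w^σ`, so that the covariant derivative along a curve with velocity `N`
is `V' + Γ(N, V)`. -/
def christoffel (g : (ι → ℝ) → Matrix ι ι ℝ) (x v w : ι → ℝ) : ι → ℝ :=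
  fun μ => ∑ ρ, ∑ σ, Γc g μ ρ σ x * v ρ * w σ

variable {g : (ι → ℝ) → Matrix ι ι ℝ} {x : ι → ℝ}

lemma christoffel_add_right (v w w' : ι → ℝ) :
    christoffel g x v (w + w') = christoffel g x v w + christoffel g x v w' := by
  ext μ
  simp only [christoffel, Pi.add_apply, mul_add, Finset.sum_add_distrib]

lemma christoffel_smul_right (c : ℝ) (v w : ι → ℝ) :
    christoffel g x v (c • w) = c • christoffel g x v w := by
  ext μ
  simp only [christoffel, Pi.smul_apply, smul_eq_mul, Finset.mul_sum]
  exact Finset.sum_congr rfl fun ρ _ => Finset.sum_congr rfl fun σ _ => by ring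

lemma sq_gradVec (hdet : IsUnit (g x).det) (φ : (ι → ℝ) → ℝ) (v : ι → ℝ) :
    sq g x v (gradVec g φ x) = fderiv ℝ φ x v := by
  have hgrad : gradVec g φ x = (g x)⁻¹ *ᵥ fun ν => pd φ ν x := rfl
  rw [sq_eq_dotProduct, hgrad, Matrix.mulVec_mulVec, Matrix.mul_nonsing_inv _ hdet,
    Matrix.one_mulVec, dotProduct_comm, fderiv_apply_eq_sum_pd, dotProduct]

/-- Koszul's formula; the bracket terms vanish on constant vector fields. -/
lemma sq_christoffel (hg : ∀ μ ν, DifferentiableAt ℝ (fun y => g y μ ν) x)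
    (hdet : IsUnit (g x).det) (z v w : ι → ℝ) :
    sq g x z (christoffel g x v w)
      = (1 / 2) * (fderiv ℝ (fun y => sq g y z w) x v + fderiv ℝ (fun y => sq g y z v) x w
          - fderiv ℝ (fun y => sq g y v w) x z) := by
  set c : ι → ℝ := fun k => ∑ ρ, ∑ σ, (1 / 2) * (pd (fun y => g y k σ) ρ x
    + pd (fun y => g y k ρ) σ x - pd (fun y => g y ρ σ) k x) * v ρ * w σ with hc
  have hraise : christoffel g x v w = (g x)⁻¹ *ᵥ c := by
    ext μ
    simp only [christoffel, Γc, ginv, Matrix.mulVec, dotProduct, hc, Finset.mul_sum,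
      Finset.sum_mul]
    refine ((Finset.sum_congr rfl fun ρ _ => Finset.sum_comm).trans Finset.sum_comm).trans ?_
    exact Finset.sum_congr rfl fun k _ => Finset.sum_congr rfl fun ρ _ =>
      Finset.sum_congr rfl fun σ _ => by ring
  have h₁ : fderiv ℝ (fun y => sq g y z w) x v
      = ∑ k, ∑ ρ, ∑ σ, pd (fun y => g y k σ) ρ x * v ρ * z k * w σ := by
    simp only [fderiv_sq hg, fderiv_apply_eq_sum_pd, Finset.sum_mul]
    exact Finset.sum_congr rfl fun k _ => Finset.sum_comm
  have h₂ : fderiv ℝ (fun y => sq g y z v) x w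
      = ∑ k, ∑ ρ, ∑ σ, pd (fun y => g y k ρ) σ x * w σ * z k * v ρ := by
    simp only [fderiv_sq hg, fderiv_apply_eq_sum_pd, Finset.sum_mul]
  have h₃ : fderiv ℝ (fun y => sq g y v w) x z
      = ∑ k, ∑ ρ, ∑ σ, pd (fun y => g y ρ σ) k x * z k * v ρ * w σ := by
    simp only [fderiv_sq hg, fderiv_apply_eq_sum_pd, Finset.sum_mul]
    exact (Finset.sum_congr rfl fun ρ _ => Finset.sum_comm).trans Finset.sum_comm
  rw [sq_eq_dotProduct, hraise, Matrix.mulVec_mulVec, Matrix.mul_nonsing_inv _ hdet,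
    Matrix.one_mulVec, h₁, h₂, h₃]
  simp only [dotProduct, hc, Finset.mul_sum, ← Finset.sum_add_distrib, ← Finset.sum_sub_distrib]
  exact Finset.sum_congr rfl fun k _ => Finset.sum_congr rfl fun ρ _ =>
    Finset.sum_congr rfl fun σ _ => by ring

lemma sq_christoffel_add_sq_christoffel (hg : SmoothMetric g) (x z v w : ι → ℝ) :
    sq g x (christoffel g x z v) w + sq g x v (christoffel g x z w)
      = fderiv ℝ (fun y => sq g y v w) x z := by
  have hdiff : ∀ μ ν, DifferentiableAt ℝ (fun y => g y μ ν) x := fun μ ν =>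
    (hg.1 μ ν).differentiable (by simp) x
  have hcomm : ∀ a b, (fun y => sq g y a b) = fun y => sq g y b a := fun a b =>
    funext fun y => sq_comm (hg.2.1 y) a b
  rw [sq_comm (hg.2.1 x), sq_christoffel hdiff (hg.2.2 x), sq_christoffel hdiff (hg.2.2 x),
    hcomm w z, hcomm w v, hcomm v z]
  ring

lemma covD_eq (γ V : ℝ → ι → ℝ) (u : ℝ) :
    covD g γ V u = (fun μ => deriv (fun w => V w μ) u) + christoffel g (γ u) (vel γ u) (V u) := rfl

lemma covD_smul {γ V : ℝ → ι → ℝ} {φ : ℝ → ℝ} {u : ℝ} (hφ : DifferentiableAt ℝ φ u)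
    (hV : ∀ μ, DifferentiableAt ℝ (fun w => V w μ) u) :
    covD g γ (fun w => φ w • V w) u = deriv φ u • V u + φ u • covD g γ V u := by
  ext μ
  simp only [covD_eq, christoffel_smul_right, Pi.add_apply, Pi.smul_apply, smul_eq_mul,
    deriv_fun_mul hφ (hV μ)]
  ring

lemma covD_sub {γ V W : ℝ → ι → ℝ} {u : ℝ} (hV : ∀ μ, DifferentiableAt ℝ (fun w => V w μ) u)
    (hW : ∀ μ, DifferentiableAt ℝ (fun w => W w μ) u) :
    covD g γ (fun w => V w - W w) u = covD g γ V u - covD g γ W u := by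
  ext μ
  have hneg : christoffel g (γ u) (vel γ u) (V u - W u)
      = christoffel g (γ u) (vel γ u) (V u) - christoffel g (γ u) (vel γ u) (W u) := by
    rw [sub_eq_add_neg, ← neg_one_smul ℝ (W u), christoffel_add_right, christoffel_smul_right,
      neg_one_smul, sub_eq_add_neg]
  simp only [covD_eq, hneg, Pi.add_apply, Pi.sub_apply, deriv_fun_sub (hV μ) (hW μ)]
  ring

lemma hasDerivAt_sq (hg : SmoothMetric g) {γ V W : ℝ → ι → ℝ} {u : ℝ}
    (hγ : ∀ μ, DifferentiableAt ℝ (fun w => γ w μ) u)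
    (hV : ∀ μ, DifferentiableAt ℝ (fun w => V w μ) u)
    (hW : ∀ μ, DifferentiableAt ℝ (fun w => W w μ) u) :
    HasDerivAt (fun w => sq g (γ w) (V w) (W w))
      (sq g (γ u) (covD g γ V u) (W u) + sq g (γ u) (V u) (covD g γ W u)) u := by
  have hdiff : ∀ μ ν, DifferentiableAt ℝ (fun y => g y μ ν) (γ u) := fun μ ν =>
    (hg.1 μ ν).differentiable (by simp) (γ u)
  have hproduct : HasDerivAt (fun w => sq g (γ w) (V w) (W w))
      (fderiv ℝ (fun y => sq g y (V u) (W u)) (γ u) (vel γ u)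
        + sq g (γ u) (fun μ => deriv (fun w => V w μ) u) (W u)
        + sq g (γ u) (V u) (fun μ => deriv (fun w => W w μ) u)) u := by
    rw [fderiv_sq hdiff]
    simp only [sq, ← Finset.sum_add_distrib]
    refine HasDerivAt.fun_sum fun μ _ => HasDerivAt.fun_sum fun ν _ => ?_
    refine (((hasDerivAt_comp_curve (hdiff μ ν) hγ).fun_mul (hV μ).hasDerivAt).fun_mul
      (hW ν).hasDerivAt).congr_deriv ?_
    ring
  refine hproduct.congr_deriv ?_
  rw [covD_eq, covD_eq, sq_add_left, sq_add_right,
    ← sq_christoffel_add_sq_christoffel hg (γ u) (vel γ u)]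
  ring

lemma sq_eq_sq_zero_of_isParallel (hg : SmoothMetric g) {γ V W : ℝ → ι → ℝ}
    (hγ : SmoothCurve γ) (hVs : SmoothCurve V) (hWs : SmoothCurve W)
    (hV : IsParallel g γ V) (hW : IsParallel g γ W) (u : ℝ) :
    sq g (γ u) (V u) (W u) = sq g (γ 0) (V 0) (W 0) := by
  have hderiv : ∀ u, HasDerivAt (fun w => sq g (γ w) (V w) (W w)) 0 u := fun u => by
    refine (hasDerivAt_sq hg (hγ.differentiableAt u) (hVs.differentiableAt u)
      (hWs.differentiableAt u)).congr_deriv ?_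
    simp only [sq, funext (hV u), funext (hW u), mul_zero, zero_mul, Finset.sum_const_zero,
      add_zero]
  exact is_const_of_deriv_eq_zero (fun u => (hderiv u).differentiableAt)
    (fun u => (hderiv u).deriv) u 0

end LeviCivita

section Continuity

variable {g : (ι → ℝ) → Matrix ι ι ℝ}

lemma contDiff_pd {φ : (ι → ℝ) → ℝ} {k m : WithTop ℕ∞} (hφ : ContDiff ℝ k φ) (hkm : m + 1 ≤ k)
    (ρ : ι) : ContDiff ℝ m (pd φ ρ) :=
  (hφ.fderiv_right hkm).clm_apply contDiff_const

lemma SmoothMetric.continuous_ginv (hg : SmoothMetric g) : Continuous (ginv g) := by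
  have hcont : Continuous g := continuous_matrix fun μ ν => (hg.1 μ ν).continuous
  refine continuous_iff_continuousAt.2 fun x => ?_
  refine (continuousAt_matrix_inv (g x) ?_).comp hcont.continuousAt
  exact (hg.2.2 x).unit_spec ▸ NormedRing.inverse_continuousAt _

lemma SmoothMetric.continuous_christoffelSymbol (hg : SmoothMetric g) (μ ρ σ : ι) :
    Continuous (Γc g μ ρ σ) := by
  have hpd : ∀ α β ν, Continuous (pd (fun y => g y α β) ν) := fun α β ν =>
    (contDiff_pd (m := 0) (hg.1 α β) (by simp) ν).continuous
  have hginv := fun ν => hg.continuous_ginv.matrix_elem μ ν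
  unfold Γc
  fun_prop

lemma SmoothMetric.continuous_christoffel (hg : SmoothMetric g) {γ V W : ℝ → ι → ℝ}
    (hγ : Continuous γ) (hV : Continuous V) (hW : Continuous W) :
    Continuous fun u => christoffel g (γ u) (V u) (W u) := by
  have hΓ := hg.continuous_christoffelSymbol
  unfold christoffel
  fun_prop

lemma SmoothMetric.continuous_gradVec (hg : SmoothMetric g) {φ : (ι → ℝ) → ℝ}
    (hφ : ContDiff ℝ 1 φ) : Continuous (gradVec g φ) :=
  continuous_pi fun μ => continuous_finsetSum _ fun ν _ =>
    (hg.continuous_ginv.matrix_elem μ ν).mul (contDiff_pd (m := 0) hφ (by simp) ν).continuous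

lemma SmoothMetric.continuous_sq (hg : SmoothMetric g) {γ V W : ℝ → ι → ℝ}
    (hγ : Continuous γ) (hV : Continuous V) (hW : Continuous W) :
    Continuous fun u => sq g (γ u) (V u) (W u) := by
  have hentry := fun μ ν => (hg.1 μ ν).continuous
  unfold sq
  fun_prop

end Continuity

section WarpedProduct

variable {d₁ d₂ : ℕ} {gB : (Fin d₁ → ℝ) → Matrix (Fin d₁) (Fin d₁) ℝ}
  {gF : (Fin d₂ → ℝ) → Matrix (Fin d₂) (Fin d₂) ℝ} {f : (Fin d₁ → ℝ) → ℝ}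

lemma sq_warped (x v w : Fin d₁ ⊕ Fin d₂ → ℝ) :
    sq (warped gB gF f) x v w = sq gB (basePt x) (basePt v) (basePt w)
      + f (basePt x) ^ 2 * sq gF (fibPt x) (fibPt v) (fibPt w) := by
  simp [sq, warped, basePt, fibPt, Fintype.sum_sum_type, Finset.mul_sum, mul_assoc]

lemma hasFDerivAt_basePt (x : Fin d₁ ⊕ Fin d₂ → ℝ) :
    HasFDerivAt basePt
      (.pi fun a => .proj (Sum.inl a) : (Fin d₁ ⊕ Fin d₂ → ℝ) →L[ℝ] Fin d₁ → ℝ) x :=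
  hasFDerivAt_pi.2 fun a => hasFDerivAt_apply (Sum.inl a) x

lemma hasFDerivAt_fibPt (x : Fin d₁ ⊕ Fin d₂ → ℝ) :
    HasFDerivAt fibPt
      (.pi fun i => .proj (Sum.inr i) : (Fin d₁ ⊕ Fin d₂ → ℝ) →L[ℝ] Fin d₂ → ℝ) x :=
  hasFDerivAt_pi.2 fun i => hasFDerivAt_apply (Sum.inr i) x

lemma contDiff_basePt : ContDiff ℝ (⊤ : ℕ∞) (basePt : (Fin d₁ ⊕ Fin d₂ → ℝ) → Fin d₁ → ℝ) :=
  contDiff_pi.2 fun a => contDiff_apply ℝ ℝ (Sum.inl a)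

lemma contDiff_fibPt : ContDiff ℝ (⊤ : ℕ∞) (fibPt : (Fin d₁ ⊕ Fin d₂ → ℝ) → Fin d₂ → ℝ) :=
  contDiff_pi.2 fun i => contDiff_apply ℝ ℝ (Sum.inr i)

lemma warped_eq_fromBlocks (x : Fin d₁ ⊕ Fin d₂ → ℝ) :
    warped gB gF f x
      = Matrix.fromBlocks (gB (basePt x)) 0 0 (f (basePt x) ^ 2 • gF (fibPt x)) := by
  ext (a | i) (b | j) <;> rfl

lemma SmoothMetric.warped (hB : SmoothMetric gB) (hF : SmoothMetric gF)
    (hf : ContDiff ℝ (⊤ : ℕ∞) f) (hf₀ : ∀ y, f y ≠ 0) : SmoothMetric (warped gB gF f) := by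
  refine ⟨?_, ?_, fun x => ?_⟩
  · rintro (a | i) (b | j)
    · exact (hB.1 a b).comp contDiff_basePt
    · exact contDiff_const
    · exact contDiff_const
    · exact ((hf.comp contDiff_basePt).pow 2).mul ((hF.1 i j).comp contDiff_fibPt)
  · rintro x (a | i) (b | j)
    · exact hB.2.1 _ a b
    · rfl
    · rfl
    · exact congrArg (f (basePt x) ^ 2 * ·) (hF.2.1 _ i j)
  · rw [warped_eq_fromBlocks, Matrix.det_fromBlocks_zero₂₁, Matrix.det_smul]
    exact (hB.2.2 _).mul ((((hf₀ _).isUnit.pow 2).pow _).mul (hF.2.2 _))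

lemma fderiv_sq_warped {x : Fin d₁ ⊕ Fin d₂ → ℝ}
    (hB : ∀ a b, DifferentiableAt ℝ (fun y => gB y a b) (basePt x))
    (hF : ∀ i j, DifferentiableAt ℝ (fun y => gF y i j) (fibPt x))
    (hf : DifferentiableAt ℝ f (basePt x)) (v w z : Fin d₁ ⊕ Fin d₂ → ℝ) :
    fderiv ℝ (fun y => sq (warped gB gF f) y v w) x z
      = fderiv ℝ (fun y => sq gB y (basePt v) (basePt w)) (basePt x) (basePt z)
        + 2 * f (basePt x) * fderiv ℝ f (basePt x) (basePt z)
          * sq gF (fibPt x) (fibPt v) (fibPt w)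
        + f (basePt x) ^ 2
          * fderiv ℝ (fun y => sq gF y (fibPt v) (fibPt w)) (fibPt x) (fibPt z) := by
  have hsqB : DifferentiableAt ℝ (fun y => sq gB y (basePt v) (basePt w)) (basePt x) := by
    unfold sq; fun_prop
  have hsqF : DifferentiableAt ℝ (fun y => sq gF y (fibPt v) (fibPt w)) (fibPt x) := by
    unfold sq; fun_prop
  have h := (hsqB.hasFDerivAt.comp x (hasFDerivAt_basePt x)).add
    (((hf.hasFDerivAt.comp x (hasFDerivAt_basePt x)).pow 2).mul
      (hsqF.hasFDerivAt.comp x (hasFDerivAt_fibPt x)))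
  rw [funext fun y => sq_warped y v w]
  have hbase : (fun a => z (Sum.inl a)) = basePt z := rfl
  have hfib : (fun i => z (Sum.inr i)) = fibPt z := rfl
  refine (DFunLike.congr_fun h.fderiv z).trans ?_
  simp only [Function.comp_apply, Nat.add_one_sub_one, pow_one, nsmul_eq_mul, Nat.cast_ofNat,
    _root_.add_apply, ContinuousLinearMap.comp_apply, ContinuousLinearMap.coe_pi',
    ContinuousLinearMap.proj_apply, hbase, _root_.smul_apply, hfib, smul_eq_mul]
  ring

/-- O'Neill's formulas for the Levi-Civita connection of a warped product. -/
lemma christoffel_warped (hB : SmoothMetric gB) (hF : SmoothMetric gF)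
    (hf : ContDiff ℝ (⊤ : ℕ∞) f) (hf₀ : ∀ y, f y ≠ 0) (x v w : Fin d₁ ⊕ Fin d₂ → ℝ) :
    christoffel (warped gB gF f) x v w = Sum.elim
      (christoffel gB (basePt x) (basePt v) (basePt w)
        - (f (basePt x) * sq gF (fibPt x) (fibPt v) (fibPt w)) • gradVec gB f (basePt x))
      (christoffel gF (fibPt x) (fibPt v) (fibPt w)
        + (f (basePt x))⁻¹ • (fderiv ℝ f (basePt x) (basePt v) • fibPt w
          + fderiv ℝ f (basePt x) (basePt w) • fibPt v)) := by
  have hg := hB.warped hF hf hf₀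
  have hgd := fun μ ν => (hg.1 μ ν).differentiable (by simp) x
  have hBd := fun a b => (hB.1 a b).differentiable (by simp) (basePt x)
  have hFd := fun i j => (hF.1 i j).differentiable (by simp) (fibPt x)
  have hfd := hf.differentiable (by simp) (basePt x)
  have hsplit : ∀ (a : Fin d₁ → ℝ) (b : Fin d₂ → ℝ),
      basePt (Sum.elim a b) = a ∧ fibPt (Sum.elim a b) = b := fun a b => ⟨rfl, rfl⟩
  refine eq_of_forall_sq_eq (hg.2.2 x) fun z => ?_
  rw [sq_christoffel hgd (hg.2.2 x), sq_warped, (hsplit _ _).1, (hsplit _ _).2, sq_sub_right,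
    sq_smul_right, sq_gradVec (hB.2.2 _), sq_christoffel hBd (hB.2.2 _), sq_add_right,
    sq_smul_right, sq_add_right, sq_smul_right, sq_smul_right, sq_christoffel hFd (hF.2.2 _),
    fderiv_sq_warped hBd hFd hfd, fderiv_sq_warped hBd hFd hfd, fderiv_sq_warped hBd hFd hfd]
  have := hf₀ (basePt x)
  field_simp
  ring

end WarpedProduct

section ParallelTransport

variable {d₁ d₂ : ℕ} {gB : (Fin d₁ → ℝ) → Matrix (Fin d₁) (Fin d₁) ℝ}
  {gF : (Fin d₂ → ℝ) → Matrix (Fin d₂) (Fin d₂) ℝ} {f : (Fin d₁ → ℝ) → ℝ}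
  {γ V : ℝ → Fin d₁ ⊕ Fin d₂ → ℝ}

lemma SmoothCurve.baseCurve (hγ : SmoothCurve γ) : SmoothCurve (baseCurve γ) :=
  fun a => hγ (Sum.inl a)

lemma SmoothCurve.fibCurve (hγ : SmoothCurve γ) : SmoothCurve (fibCurve γ) :=
  fun i => hγ (Sum.inr i)

lemma covD_warped_base (hB : SmoothMetric gB) (hF : SmoothMetric gF)
    (hf : ContDiff ℝ (⊤ : ℕ∞) f) (hf₀ : ∀ y, f y ≠ 0) (γ V : ℝ → Fin d₁ ⊕ Fin d₂ → ℝ) (u : ℝ) :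
    basePt (covD (warped gB gF f) γ V u)
      = covD gB (baseCurve γ) (baseCurve V) u
        - (f (baseCurve γ u) * sq gF (fibCurve γ u) (vel (fibCurve γ) u) (fibCurve V u))
          • gradVec gB f (baseCurve γ u) := by
  rw [covD_eq, christoffel_warped hB hF hf hf₀, covD_eq, add_sub_assoc]
  rfl

lemma covD_warped_fiber (hB : SmoothMetric gB) (hF : SmoothMetric gF)
    (hf : ContDiff ℝ (⊤ : ℕ∞) f) (hf₀ : ∀ y, f y ≠ 0) (γ V : ℝ → Fin d₁ ⊕ Fin d₂ → ℝ) (u : ℝ) :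
    fibPt (covD (warped gB gF f) γ V u)
      = covD gF (fibCurve γ) (fibCurve V) u + (f (baseCurve γ u))⁻¹
          • (fderiv ℝ f (baseCurve γ u) (vel (baseCurve γ) u) • fibCurve V u
            + fderiv ℝ f (baseCurve γ u) (baseCurve V u) • vel (fibCurve γ) u) := by
  rw [covD_eq, christoffel_warped hB hF hf hf₀, covD_eq, add_assoc]
  rfl

lemma covD_smul_fibCurve_of_isParallel (hB : SmoothMetric gB) (hF : SmoothMetric gF)
    (hf : ContDiff ℝ (⊤ : ℕ∞) f) (hf₀ : ∀ y, f y ≠ 0) (hγ : SmoothCurve γ) (hVs : SmoothCurve V)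
    (hV : IsParallel (warped gB gF f) γ V) (u : ℝ) :
    covD gF (fibCurve γ) (fun w => f (baseCurve γ w) • fibCurve V w) u
      = -fderiv ℝ f (baseCurve γ u) (baseCurve V u) • vel (fibCurve γ) u := by
  have hderiv := hasDerivAt_comp_curve (hf.differentiable (by simp) _)
    (hγ.baseCurve.differentiableAt u)
  have hfiber := covD_warped_fiber hB hF hf hf₀ γ V u
  rw [funext (hV u)] at hfiber
  rw [covD_smul hderiv.differentiableAt (hVs.fibCurve.differentiableAt u), hderiv.deriv]
  ext i
  have hi := congrFun hfiber i
  have := hf₀ (baseCurve γ u)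
  simp only [fibPt, Pi.add_apply, Pi.smul_apply, smul_eq_mul] at hi ⊢
  field_simp at hi
  linear_combination -hi

lemma isParallel_pow_two_smul_vel_fibCurve (hB : SmoothMetric gB) (hF : SmoothMetric gF)
    (hf : ContDiff ℝ (⊤ : ℕ∞) f) (hf₀ : ∀ y, f y ≠ 0) (hγ : SmoothCurve γ)
    (hgeo : IsGeodesic (warped gB gF f) γ) :
    IsParallel gF (fibCurve γ) fun u => f (baseCurve γ u) ^ 2 • vel (fibCurve γ) u := by
  intro u i
  have hderiv := hasDerivAt_comp_curve (hf.differentiable (by simp) _)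
    (hγ.baseCurve.differentiableAt u)
  have hdiff : ∀ i, DifferentiableAt ℝ (fun w => (f (baseCurve γ w) • vel (fibCurve γ) w) i) u :=
    fun i => hderiv.differentiableAt.mul (hγ.fibCurve.vel.differentiableAt u i)
  have hvel : covD gF (fibCurve γ) (fun w => f (baseCurve γ w) • vel (fibCurve γ) w) u
      = -fderiv ℝ f (baseCurve γ u) (vel (baseCurve γ) u) • vel (fibCurve γ) u :=
    covD_smul_fibCurve_of_isParallel hB hF hf hf₀ hγ hγ.vel hgeo u
  simp only [pow_two, mul_smul]
  rw [covD_smul hderiv.differentiableAt hdiff, hderiv.deriv, hvel]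
  simp only [Pi.add_apply, Pi.smul_apply, smul_eq_mul]
  ring

lemma hasDerivAt_baseCurve_of_isParallel (hB : SmoothMetric gB) (hF : SmoothMetric gF)
    (hf : ContDiff ℝ (⊤ : ℕ∞) f) (hf₀ : ∀ y, f y ≠ 0) (hVs : SmoothCurve V)
    (hV : IsParallel (warped gB gF f) γ V) (u : ℝ)
    (horth : sq (warped gB gF f) (γ u) (vel γ u) (V u) = 0) :
    HasDerivAt (baseCurve V)
      (-(christoffel gB (baseCurve γ u) (vel (baseCurve γ) u) (baseCurve V u)
        + ((f (baseCurve γ u))⁻¹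
            * sq gB (baseCurve γ u) (vel (baseCurve γ) u) (baseCurve V u))
          • gradVec gB f (baseCurve γ u))) u := by
  have hbase := covD_warped_base hB hF hf hf₀ γ V u
  rw [funext (hV u), covD_eq] at hbase
  have hcoef : f (baseCurve γ u) * sq gF (fibCurve γ u) (vel (fibCurve γ) u) (fibCurve V u)
      = -((f (baseCurve γ u))⁻¹
        * sq gB (baseCurve γ u) (vel (baseCurve γ) u) (baseCurve V u)) := by
    have hsplit : sq gB (baseCurve γ u) (vel (baseCurve γ) u) (baseCurve V u)
        + f (baseCurve γ u) ^ 2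
          * sq gF (fibCurve γ u) (vel (fibCurve γ) u) (fibCurve V u) = 0 :=
      (sq_warped _ _ _).symm.trans horth
    have := hf₀ (baseCurve γ u)
    field_simp
    linear_combination hsplit
  rw [hcoef] at hbase
  refine (hasDerivAt_pi.2 fun a => (hVs.baseCurve.differentiableAt u a).hasDerivAt).congr_deriv ?_
  ext a
  have ha := congrFun hbase a
  simp only [basePt, Pi.add_apply, Pi.sub_apply, Pi.neg_apply, Pi.smul_apply, smul_eq_mul] at ha ⊢
  linear_combination -ha

lemma baseCurve_eq_zero_of_isParallel (hB : SmoothMetric gB) (hF : SmoothMetric gF)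
    (hf : ContDiff ℝ (⊤ : ℕ∞) f) (hf₀ : ∀ y, f y ≠ 0) (hγ : SmoothCurve γ) (hVs : SmoothCurve V)
    (hV : IsParallel (warped gB gF f) γ V)
    (horth : ∀ u, sq (warped gB gF f) (γ u) (vel γ u) (V u) = 0)
    (h₀ : baseCurve V 0 = 0) (u : ℝ) : baseCurve V u = 0 := by
  have hcont : ∀ {α : ℝ → Fin d₁ → ℝ}, SmoothCurve α → Continuous α := fun hα =>
    continuous_pi fun a => (hα a).continuous
  have hpos := hcont hγ.baseCurve
  have hvel := hcont hγ.baseCurve.vel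
  refine eq_zero_of_hasDerivAt_isLinearMap_apply (X := baseCurve V)
    (v := fun t w => -(christoffel gB (baseCurve γ t) (vel (baseCurve γ) t) w
      + ((f (baseCurve γ t))⁻¹ * sq gB (baseCurve γ t) (vel (baseCurve γ) t) w)
        • gradVec gB f (baseCurve γ t))) (fun t => ⟨fun w w' => ?_, fun c w => ?_⟩) (fun w => ?_)
    (fun t => hasDerivAt_baseCurve_of_isParallel hB hF hf hf₀ hVs hV t (horth t)) h₀ u
  · rw [christoffel_add_right, sq_add_right]
    module
  · rw [christoffel_smul_right, sq_smul_right]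
    module
  · have hf' := (hf.continuous.comp hpos).inv₀ fun t => hf₀ _
    exact ((hB.continuous_christoffel hpos hvel continuous_const).add
      ((hf'.mul (hB.continuous_sq hpos hvel continuous_const)).smul
        ((hB.continuous_gradVec (hf.of_le (by simp))).comp hpos))).neg

/-- The function `h` with `dh/du = Ê^a ∂_a(1/f)`, `h(0) = 0`, of a vector field `E` along `γ`,
written as the integral of its derivative. -/
def fiberCoeff (f : (Fin d₁ → ℝ) → ℝ) (γ E : ℝ → Fin d₁ ⊕ Fin d₂ → ℝ) (u : ℝ) : ℝ :=
  ∫ t in 0..u, ∑ a, E t (Sum.inl a) * pd (fun y => (f y)⁻¹) a (basePt (γ t))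

/-- The part `Ē_∥ = f Ē - h f² N̄` of the fiber component of a vector field `E` along `γ`, which is
`ḡ`-parallel along the fiber projection when `γ` is a geodesic and `E` is parallel. -/
def fiberParallelPart (f : (Fin d₁ → ℝ) → ℝ) (γ E : ℝ → Fin d₁ ⊕ Fin d₂ → ℝ) (u : ℝ) :
    Fin d₂ → ℝ :=
  f (baseCurve γ u) • fibCurve E u
    - fiberCoeff f γ E u • f (baseCurve γ u) ^ 2 • vel (fibCurve γ) u

variable {E : ℝ → Fin d₁ ⊕ Fin d₂ → ℝ}

lemma contDiff_sum_mul_pd {φ : (Fin d₁ → ℝ) → ℝ} (hφ : ContDiff ℝ (⊤ : ℕ∞) φ) (hγ : SmoothCurve γ)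
    (hE : SmoothCurve E) :
    ContDiff ℝ (⊤ : ℕ∞) fun u => ∑ a, E u (Sum.inl a) * pd φ a (basePt (γ u)) :=
  ContDiff.sum fun a _ => (hE _).mul
    ((contDiff_pd hφ (by simp) a).comp (contDiff_basePt.comp (contDiff_pi.2 hγ)))

lemma hasDerivAt_fiberCoeff (hf : ContDiff ℝ (⊤ : ℕ∞) f) (hf₀ : ∀ y, f y ≠ 0) (hγ : SmoothCurve γ)
    (hE : SmoothCurve E) (u : ℝ) :
    HasDerivAt (fiberCoeff f γ E)
      (∑ a, E u (Sum.inl a) * pd (fun y => (f y)⁻¹) a (basePt (γ u))) u :=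
  ((contDiff_sum_mul_pd (hf.inv hf₀) hγ hE).continuous.integral_hasStrictDerivAt 0 u).hasDerivAt

lemma contDiff_fiberCoeff (hf : ContDiff ℝ (⊤ : ℕ∞) f) (hf₀ : ∀ y, f y ≠ 0) (hγ : SmoothCurve γ)
    (hE : SmoothCurve E) : ContDiff ℝ (⊤ : ℕ∞) (fiberCoeff f γ E) := by
  have hderiv := hasDerivAt_fiberCoeff hf hf₀ hγ hE
  rw [contDiff_infty_iff_deriv, funext fun u => (hderiv u).deriv]
  exact ⟨fun u => (hderiv u).differentiableAt, contDiff_sum_mul_pd (hf.inv hf₀) hγ hE⟩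

lemma pow_two_mul_sum_mul_pd_inv {p : Fin d₁ → ℝ} (hf : DifferentiableAt ℝ f p) (hf₀ : f p ≠ 0)
    (v : Fin d₁ → ℝ) :
    f p ^ 2 * ∑ a, v a * pd (fun y => (f y)⁻¹) a p = -fderiv ℝ f p v := by
  have hinv : fderiv ℝ (fun y => (f y)⁻¹) p = -(f p ^ 2)⁻¹ • fderiv ℝ f p :=
    ((hasDerivAt_inv hf₀).comp_hasFDerivAt p hf.hasFDerivAt).fderiv
  have hsum : ∑ a, v a * pd (fun y => (f y)⁻¹) a p = -(f p ^ 2)⁻¹ * fderiv ℝ f p v := by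
    rw [← smul_eq_mul, ← _root_.smul_apply, ← hinv, fderiv_apply_eq_sum_pd]
    exact Finset.sum_congr rfl fun a _ => mul_comm _ _
  rw [hsum]
  field_simp

lemma smoothCurve_fiberParallelPart (hf : ContDiff ℝ (⊤ : ℕ∞) f) (hf₀ : ∀ y, f y ≠ 0)
    (hγ : SmoothCurve γ) (hE : SmoothCurve E) : SmoothCurve (fiberParallelPart f γ E) := by
  intro i
  have hfγ : ContDiff ℝ (⊤ : ℕ∞) fun u => f (baseCurve γ u) :=
    hf.comp (contDiff_pi.2 hγ.baseCurve)
  exact (hfγ.mul (hE.fibCurve i)).sub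
    ((contDiff_fiberCoeff hf hf₀ hγ hE).mul ((hfγ.pow 2).mul (hγ.fibCurve.vel i)))

lemma isParallel_fiberParallelPart (hB : SmoothMetric gB) (hF : SmoothMetric gF)
    (hf : ContDiff ℝ (⊤ : ℕ∞) f) (hf₀ : ∀ y, f y ≠ 0) (hγ : SmoothCurve γ)
    (hgeo : IsGeodesic (warped gB gF f) γ) (hEs : SmoothCurve E)
    (hE : IsParallel (warped gB gF f) γ E) :
    IsParallel gF (fibCurve γ) (fiberParallelPart f γ E) := by
  intro u i
  have hfγ := (hasDerivAt_comp_curve (hf.differentiable (by simp) _)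
    (hγ.baseCurve.differentiableAt u)).differentiableAt
  have hh := hasDerivAt_fiberCoeff hf hf₀ hγ hEs u
  have hN : ∀ j, DifferentiableAt ℝ
      (fun w => (f (baseCurve γ w) ^ 2 • vel (fibCurve γ) w) j) u := fun j =>
    (hfγ.pow 2).mul (hγ.fibCurve.vel.differentiableAt u j)
  have hcancel : f (baseCurve γ u) ^ 2
      * ∑ a, E u (Sum.inl a) * pd (fun y => (f y)⁻¹) a (baseCurve γ u)
        = -fderiv ℝ f (baseCurve γ u) (baseCurve E u) :=
    pow_two_mul_sum_mul_pd_inv (hf.differentiable (by simp) _) (hf₀ _) _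
  have hfE : ∀ j, DifferentiableAt ℝ (fun w => (f (baseCurve γ w) • fibCurve E w) j) u := fun j =>
    hfγ.mul (hEs.fibCurve.differentiableAt u j)
  have hhN : ∀ j, DifferentiableAt ℝ (fun w =>
      (fiberCoeff f γ E w • f (baseCurve γ w) ^ 2 • vel (fibCurve γ) w) j) u := fun j =>
    hh.differentiableAt.mul (hN j)
  unfold fiberParallelPart
  rw [covD_sub hfE hhN, covD_smul_fibCurve_of_isParallel hB hF hf hf₀ hγ hEs hE,
    covD_smul hh.differentiableAt hN, hh.deriv,
    funext (isParallel_pow_two_smul_vel_fibCurve hB hF hf hf₀ hγ hgeo u), ← hcancel]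
  simp only [Pi.sub_apply, Pi.add_apply, Pi.smul_apply, smul_eq_mul, baseCurve]
  ring

lemma fiber_eq_add_fiberParallelPart {u : ℝ} (hf₀ : f (baseCurve γ u) ≠ 0) (i : Fin d₂) :
    E u (Sum.inr i) = f (baseCurve γ u) * fiberCoeff f γ E u * vel (fibCurve γ) u i
      + (f (baseCurve γ u))⁻¹ * fiberParallelPart f γ E u i := by
  simp only [fiberParallelPart, Pi.sub_apply, Pi.smul_apply, smul_eq_mul, fibCurve, fibPt]
  field_simp
  ring

end ParallelTransport

theorem fiber_component_of_parallel_transport_general {d₁ d₂ : ℕ}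
    (gB : (Fin d₁ → ℝ) → Matrix (Fin d₁) (Fin d₁) ℝ)
    (gF : (Fin d₂ → ℝ) → Matrix (Fin d₂) (Fin d₂) ℝ)
    (f : (Fin d₁ → ℝ) → ℝ)
    (hB : SmoothMetric gB) (hF : SmoothMetric gF)
    (hf : ContDiff ℝ (⊤ : ℕ∞) f) (hf₀ : ∀ y, f y ≠ 0)
    (γ : ℝ → (Fin d₁ ⊕ Fin d₂) → ℝ) (hγs : SmoothCurve γ)
    (hgeo : IsGeodesic (warped gB gF f) γ)
    (E : ℝ → (Fin d₁ ⊕ Fin d₂) → ℝ) (hEs : SmoothCurve E)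
    (hE : IsParallel (warped gB gF f) γ E) :
    ∃ (EF : ℝ → Fin d₂ → ℝ) (h : ℝ → ℝ),
      SmoothCurve EF ∧
      IsParallel gF (fibCurve γ) EF ∧
      (∀ i, EF 0 i = f (basePt (γ 0)) * E 0 (Sum.inr i)) ∧
      h 0 = 0 ∧
      (∀ u, HasDerivAt h
        (∑ a, E u (Sum.inl a) * pd (fun y => (f y)⁻¹) a (basePt (γ u))) u) ∧
      (∀ (u : ℝ) (i : Fin d₂),
        E u (Sum.inr i)
          = f (basePt (γ u)) * h u * vel (fibCurve γ) u i
            + (f (basePt (γ u)))⁻¹ * EF u i) ∧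
      (sq (warped gB gF f) (γ 0) (vel γ 0) (E 0) = 0 → (∀ a, E 0 (Sum.inl a) = 0) →
        ∀ u : ℝ, (∀ a, E u (Sum.inl a) = 0) ∧
          ∀ i, E u (Sum.inr i) = (f (basePt (γ u)))⁻¹ * EF u i) := by
  have hh := hasDerivAt_fiberCoeff hf hf₀ hγs hEs
  have hh₀ : fiberCoeff f γ E 0 = 0 := intervalIntegral.integral_same
  have hdecomp : ∀ u i, E u (Sum.inr i)
      = f (basePt (γ u)) * fiberCoeff f γ E u * vel (fibCurve γ) u i
        + (f (basePt (γ u)))⁻¹ * fiberParallelPart f γ E u i := fun u i =>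
    fiber_eq_add_fiberParallelPart (hf₀ _) i
  refine ⟨fiberParallelPart f γ E, fiberCoeff f γ E, smoothCurve_fiberParallelPart hf hf₀ hγs hEs,
    isParallel_fiberParallelPart hB hF hf hf₀ hγs hgeo hEs hE, fun i => ?_, hh₀, hh, hdecomp,
    fun horth hE₀ u => ?_⟩
  · simp [fiberParallelPart, hh₀, baseCurve, fibCurve, fibPt]
  have horth' : ∀ u, sq (warped gB gF f) (γ u) (vel γ u) (E u) = 0 := fun u =>
    (sq_eq_sq_zero_of_isParallel (hB.warped hF hf hf₀) hγs hγs.vel hEs hgeo hE u).trans horth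
  have hbase : ∀ u a, E u (Sum.inl a) = 0 := fun u => congrFun <|
    baseCurve_eq_zero_of_isParallel hB hF hf hf₀ hγs hEs hE horth' (funext hE₀) u
  have hcoeff : fiberCoeff f γ E u = 0 := by simp [fiberCoeff, hbase]
  exact ⟨hbase u, fun i => by simpa [hcoeff] using hdecomp u i⟩

/-- Along an affinely parametrized geodesic of a warped product,
the fiber component of a parallelly transported field `E` with `E(0)` orthogonal to
`N(0)` is `Ē^i = f h N̄^i + f⁻¹ Ē^i_∥`, where `Ē_∥` is the ḡ-parallel transport of
`f(0) ē` along the fiber projection and `h` solves `dh/du = Ê^a ∂_a(1/f)`, `h(0)=0`.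
If moreover the base component of `E(0)` vanishes, then `E = (0, Ē_∥/f)`. -/
theorem fiber_component_of_parallel_transport {d₁ d₂ : ℕ}
    (gB : (Fin d₁ → ℝ) → Matrix (Fin d₁) (Fin d₁) ℝ)
    (gF : (Fin d₂ → ℝ) → Matrix (Fin d₂) (Fin d₂) ℝ)
    (f : (Fin d₁ → ℝ) → ℝ)
    (hB : SmoothMetric gB) (hF : SmoothMetric gF)
    (hf : ContDiff ℝ (⊤ : ℕ∞) f) (hfpos : ∀ y, 0 < f y)
    (γ : ℝ → (Fin d₁ ⊕ Fin d₂) → ℝ) (hγs : SmoothCurve γ)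
    (hgeo : IsGeodesic (warped gB gF f) γ)
    (E : ℝ → (Fin d₁ ⊕ Fin d₂) → ℝ) (hEs : SmoothCurve E)
    (hE : IsParallel (warped gB gF f) γ E)
    (horth : sq (warped gB gF f) (γ 0) (vel γ 0) (E 0) = 0) :
    ∃ (EF : ℝ → Fin d₂ → ℝ) (h : ℝ → ℝ),
      SmoothCurve EF ∧
      (∀ (u : ℝ) (i : Fin d₂),
        deriv (fun w => EF w i) u
            + ∑ j, ∑ k, Γc gF i j k (fibPt (γ u)) * vel (fibCurve γ) u j * EF u k = 0) ∧
      (∀ i, EF 0 i = f (basePt (γ 0)) * E 0 (Sum.inr i)) ∧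
      h 0 = 0 ∧
      (∀ u, HasDerivAt h
        (∑ a, E u (Sum.inl a) * pd (fun y => (f y)⁻¹) a (basePt (γ u))) u) ∧
      (∀ (u : ℝ) (i : Fin d₂),
        E u (Sum.inr i)
          = f (basePt (γ u)) * h u * vel (fibCurve γ) u i
            + (f (basePt (γ u)))⁻¹ * EF u i) ∧
      ((∀ a, E 0 (Sum.inl a) = 0) →
        ∀ u : ℝ, (∀ a, E u (Sum.inl a) = 0) ∧
          ∀ i, E u (Sum.inr i) = (f (basePt (γ u)))⁻¹ * EF u i) := by
  obtain ⟨EF, h, hEF, hpar, hEF₀, hh₀, hh, hdecomp, hbase⟩ :=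
    fiber_component_of_parallel_transport_general gB gF f hB hF hf (fun y => (hfpos y).ne') γ hγs
      hgeo E hEs hE
  exact ⟨EF, h, hEF, hpar, hEF₀, hh₀, hh, hdecomp, hbase horth⟩

end Paper
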